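/- Let A be a commutative ring and B an A-algebra which is finite and free as an A-module. Let C := B ⊗_A B with multiplication map m : C → B and J := ker m. Then the A-linear map h : B ⊗_A B → Hom_A(B*, B), defined by h(b₁ ⊗ b₂)(f) = f(b₁)·b₂ for f ∈ B* := Hom_A(B,A), is bijective, and it restricts to a bijection from Ann_C(J) onto the subset Hom_B(B*, B) ⊆ Hom_A(B*, B) of B-linear maps (where B* carries the B-module structure (b·f)(y) = f(by) and C acts on B via m). -/

import Mathlib

open scoped TensorProduct

/-- The `A`-linear map `h : B ⊗[A] B → Hom_A(B*, B)`, `h (b₁ ⊗ b₂) f = f b₁ • b₂`. -/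
noncomputable def tensorToHomDual (A B : Type*) [CommRing A] [CommRing B] [Algebra A B] :
    B ⊗[A] B →ₗ[A] ((B →ₗ[A] A) →ₗ[A] B) :=
  (dualTensorHom A (Module.Dual A B) B).comp
    (TensorProduct.map (Module.Dual.eval A B) LinearMap.id)

theorem tensorToHomDual_tmul_aux {A B : Type*} [CommRing A] [CommRing B] [Algebra A B]
    (b c : B) (f : B →ₗ[A] A) : tensorToHomDual A B (b ⊗ₜ[A] c) f = f b • c := by
  simp [tensorToHomDual]

theorem tensorToHomDual_left_aux {A B : Type*} [CommRing A] [CommRing B] [Algebra A B]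
    (x : B ⊗[A] B) (b : B) (f : B →ₗ[A] A) :
    tensorToHomDual A B x (f.comp (LinearMap.mul A B b)) =
      tensorToHomDual A B (x * (b ⊗ₜ[A] 1)) f := by
  induction x with
  | zero => simp
  | add x y hx hy => rw [add_mul, map_add, map_add, LinearMap.add_apply, LinearMap.add_apply, hx, hy]
  | tmul u v =>
    rw [Algebra.TensorProduct.tmul_mul_tmul, tensorToHomDual_tmul_aux, tensorToHomDual_tmul_aux]
    simp [mul_comm]

theorem tensorToHomDual_right_aux {A B : Type*} [CommRing A] [CommRing B] [Algebra A B]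
    (x : B ⊗[A] B) (b : B) (f : B →ₗ[A] A) :
    b * tensorToHomDual A B x f =
      tensorToHomDual A B (x * (1 ⊗ₜ[A] b)) f := by
  induction x with
  | zero => simp
  | add x y hx hy =>
    rw [add_mul, map_add, map_add, LinearMap.add_apply, LinearMap.add_apply, mul_add, hx, hy]
  | tmul u v =>
    rw [Algebra.TensorProduct.tmul_mul_tmul, tensorToHomDual_tmul_aux, tensorToHomDual_tmul_aux]
    simp [mul_comm]

/-- Let `A` be a commutative ring and `B` an `A`-algebra which is finite and
free as an `A`-module.  Let `C := B ⊗[A] B`, `m : C → B` the multiplication map and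
`J := ker m`.  Then the map `h : B ⊗[A] B → Hom_A(B*, B)`, `h (b₁ ⊗ b₂) f = f b₁ • b₂`, is
bijective, and it restricts to a bijection from `Ann_C J` onto the subset
`Hom_B(B*, B) ⊆ Hom_A(B*, B)` of `B`-linear maps, `B* = Hom_A(B, A)` carrying the `B`-module
structure `(b · f) y = f (b * y)`. -/
theorem tensorToHomDual_bijective_and_ann_iff_B_linear
    {A B : Type*} [CommRing A] [CommRing B] [Algebra A B]
    [Module.Finite A B] [Module.Free A B] :
    Function.Bijective (tensorToHomDual A B) ∧
    ∀ x : B ⊗[A] B,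
      ((∀ j ∈ RingHom.ker (Algebra.TensorProduct.lmul' A : B ⊗[A] B →ₐ[A] B), x * j = 0) ↔
        (∀ (b : B) (f : B →ₗ[A] A),
          tensorToHomDual A B x (f.comp (LinearMap.mul A B b)) =
            b * tensorToHomDual A B x f)) := by
  have hbij : Function.Bijective (tensorToHomDual A B) := by
    have h1 : Function.Bijective (dualTensorHom A (Module.Dual A B) B) :=
      (dualTensorHomEquiv A (Module.Dual A B) B).bijective
    have h2 : Function.Bijective
        (TensorProduct.map (Module.Dual.eval A B) (LinearMap.id : B →ₗ[A] B)) :=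
      (TensorProduct.congr (Module.evalEquiv A B) (LinearEquiv.refl A B)).bijective
    exact h1.comp h2
  refine ⟨hbij, fun x => ⟨fun hx b f => ?_, fun hx j hj => ?_⟩⟩
  · rw [tensorToHomDual_left_aux, tensorToHomDual_right_aux]
    have := hx (b ⊗ₜ[A] 1 - 1 ⊗ₜ[A] b) (by simp [RingHom.mem_ker])
    rw [mul_sub, sub_eq_zero] at this
    rw [this]
  · have key : ∀ b : B, x * (b ⊗ₜ[A] 1) = x * (1 ⊗ₜ[A] b) := fun b => hbij.1 <| by
      ext f
      rw [← tensorToHomDual_left_aux, ← tensorToHomDual_right_aux, hx]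
    have key2 : ∀ y : B ⊗[A] B,
        x * y = x * (1 ⊗ₜ[A] (Algebra.TensorProduct.lmul' A : B ⊗[A] B →ₐ[A] B) y) := by
      intro y
      induction y with
      | zero => simp
      | add y z hy hz => rw [mul_add, hy, hz, map_add, TensorProduct.tmul_add, mul_add]
      | tmul u v =>
        have e : u ⊗ₜ[A] v = (u ⊗ₜ[A] (1 : B)) * ((1 : B) ⊗ₜ[A] v) := by simp
        rw [e, ← mul_assoc, key, mul_assoc]
        simp
    rw [key2, (RingHom.mem_ker).1 hj, TensorProduct.tmul_zero, mul_zero]
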